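/- arXiv:2312.06539 — 2 statements merged into one kernel-verified Lean document; each statement's English description precedes it below -/
import Mathlib

section
/- Let p₁ : G₁ → Q and p₂ : G₂ → Q be surjective group homomorphisms and let P = {(g₁, g₂) ∈ G₁ × G₂ : p₁(g₁) = p₂(g₂)} be their fibre product. Let S₁ be a generating set of G₁ and S₂ a generating set of G₂. Suppose u : S₁ → G₂ satisfies p₂(u(s)) = p₁(s) for all s ∈ S₁, suppose v : S₂ → G₁ satisfies p₁(v(t)) = p₂(t) for all t ∈ S₂, and suppose R is a subset of ker p₁ whose normal closure in G₁ equals ker p₁. Then P is generated by the set {(s, u(s)) : s ∈ S₁} ∪ {(v(t), t) : t ∈ S₂} ∪ {(r, 1) : r ∈ R}. -/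
/-!
Write `H` for the subgroup generated by the given set. Since `S₁` and `S₂` generate, `H` projects
onto both factors. Surjectivity onto `G₁` makes `N = {g | (g, 1) ∈ H}` normal in `G₁`: to conjugate
`(n, 1)` by `g`, conjugate it by an element `(g, y)` of `H`. As `R ⊆ N`, it follows that
`ker p₁ ⊆ N`. Given `(a, b)` in the fibre product, pick `(x, b) ∈ H`; then `a * x⁻¹ ∈ ker p₁`, so
`(a, b) = (a * x⁻¹, 1) * (x, b)` lies in `H`.
-/

/-- The fibre product of two homomorphisms `p₁ : G₁ →* Q`, `p₂ : G₂ →* Q`: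
the subgroup `{(g₁, g₂) | p₁ g₁ = p₂ g₂}` of `G₁ × G₂`. -/
def fibreProduct {G₁ G₂ Q : Type*} [Group G₁] [Group G₂] [Group Q]
    (p₁ : G₁ →* Q) (p₂ : G₂ →* Q) : Subgroup (G₁ × G₂) where
  carrier := {x | p₁ x.1 = p₂ x.2}
  one_mem' := by simp
  mul_mem' := by
    intro a b ha hb
    simp only [Set.mem_setOf_eq, Prod.fst_mul, Prod.snd_mul, map_mul] at *
    rw [ha, hb]
  inv_mem' := by
    intro a ha
    simp only [Set.mem_setOf_eq, Prod.fst_inv, Prod.snd_inv, map_inv] at *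
    rw [ha]

theorem fibreProduct_generated_by
    {G₁ G₂ Q : Type*} [Group G₁] [Group G₂] [Group Q]
    (p₁ : G₁ →* Q) (p₂ : G₂ →* Q)
    (h₁ : Function.Surjective p₁) (h₂ : Function.Surjective p₂)
    (S₁ : Set G₁) (hS₁ : Subgroup.closure S₁ = ⊤)
    (S₂ : Set G₂) (hS₂ : Subgroup.closure S₂ = ⊤)
    (u : G₁ → G₂) (hu : ∀ s ∈ S₁, p₂ (u s) = p₁ s)
    (v : G₂ → G₁) (hv : ∀ t ∈ S₂, p₁ (v t) = p₂ t)
    (R : Set G₁) (hRsub : R ⊆ (p₁.ker : Set G₁))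
    (hR : Subgroup.normalClosure R = p₁.ker) :
    Subgroup.closure
        ((fun s => (s, u s)) '' S₁ ∪ (fun t => (v t, t)) '' S₂ ∪
          (fun r => (r, (1 : G₂))) '' R) =
      fibreProduct p₁ p₂ := by
  have mem_iff : ∀ x : G₁ × G₂, x ∈ fibreProduct p₁ p₂ ↔ p₁ x.1 = p₂ x.2 := fun _ => Iff.rfl
  have hle : Subgroup.closure
        ((fun s => (s, u s)) '' S₁ ∪ (fun t => (v t, t)) '' S₂ ∪
          (fun r => (r, (1 : G₂))) '' R) ≤ fibreProduct p₁ p₂ := by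
    rw [Subgroup.closure_le]
    rintro _ ((⟨s, hs, rfl⟩ | ⟨t, ht, rfl⟩) | ⟨r, hr, rfl⟩)
    · exact (hu s hs).symm
    · exact hv t ht
    · have hker : p₁ r = 1 := hRsub hr
      exact (mem_iff _).2 (by simpa using hker)
  refine le_antisymm hle ?_
  generalize hH : Subgroup.closure ((fun s => (s, u s)) '' S₁ ∪ (fun t => (v t, t)) '' S₂ ∪
        (fun r => (r, (1 : G₂))) '' R) = H at hle ⊢
  have hsub := hH ▸ Subgroup.subset_closure (G := G₁ × G₂)
    (k := (fun s => (s, u s)) '' S₁ ∪ (fun t => (v t, t)) '' S₂ ∪ (fun r => (r, (1 : G₂))) '' R)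
  have hfst : H.map (MonoidHom.fst G₁ G₂) = ⊤ := by
    rw [eq_top_iff, ← hS₁, Subgroup.closure_le]
    exact fun s hs => ⟨(s, u s), hsub (.inl (.inl ⟨s, hs, rfl⟩)), rfl⟩
  have hsnd : H.map (MonoidHom.snd G₁ G₂) = ⊤ := by
    rw [eq_top_iff, ← hS₂, Subgroup.closure_le]
    exact fun t ht => ⟨(v t, t), hsub (.inl (.inr ⟨t, ht, rfl⟩)), rfl⟩
  have hnormal : (H.comap (MonoidHom.inl G₁ G₂)).Normal := by
    refine ⟨fun n hn g => ?_⟩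
    obtain ⟨⟨g', y⟩, hy, rfl⟩ : g ∈ H.map (MonoidHom.fst G₁ G₂) := hfst ▸ Subgroup.mem_top g
    have := H.mul_mem (H.mul_mem hy (Subgroup.mem_comap.1 hn)) (H.inv_mem hy)
    simpa [Subgroup.mem_comap] using this
  have hker : p₁.ker ≤ H.comap (MonoidHom.inl G₁ G₂) := by
    rw [← hR]
    exact Subgroup.normalClosure_le_normal fun r hr => hsub (.inr ⟨r, hr, rfl⟩)
  rintro ⟨a, b⟩ hab
  obtain ⟨⟨x, b'⟩, hx, rfl⟩ : b ∈ H.map (MonoidHom.snd G₁ G₂) := hsnd ▸ Subgroup.mem_top b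
  have hxP : p₁ x = p₂ b' := hle hx
  have hab' : p₁ a = p₂ b' := hab
  have hmem : a * x⁻¹ ∈ p₁.ker := by simp [MonoidHom.mem_ker, hab', hxP]
  simpa using H.mul_mem (Subgroup.mem_comap.1 (hker hmem)) hx
end

section
/- Let A be a free group, let Γ and U be groups, and let φ : A ∗ Γ → U be a group homomorphism whose restriction to the canonical copy of Γ in the free product A ∗ Γ is injective. Then the kernel of φ is a free group. -/
/-!
By the Nielsen–Schreier theorem it suffices to embed `φ.ker` into a free group. Let `B` be a basis
of `A` and let `U` act on `F = FreeGroup (U × B)` by left translation of the first index. Define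
`ψ : A ∗ Γ →* F ⋊ U` by `b ↦ (x_{(1,b)}, φ b)` and `γ ↦ (1, φ γ)`. The `U`-component of `ψ` is `φ`,
so on `φ.ker` the `F`-component of `ψ` is a homomorphism to `F`.

It is injective there. As `φ` is injective on `Γ`, choosing representatives of the cosets `u φ(Γ)`
gives a map `r : U → Γ` with `r (u φ(γ)) = r u * γ` (`exists_equivariant_retraction`). Let
`ρ : F →* A ∗ Γ` send `x_{(u,b)}` to `r(u) b r(u φ(b))⁻¹`. Then
`ρ (u • (ψ g).left) = r(u) g r(u φ(g))⁻¹` for all `g` (`rho_shift_psi_left`): both sides obey the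
same cocycle rule in `g` and they agree on generators. For `g ∈ φ.ker` and `u = 1` this says that
`ρ ((ψ g).left)` is a conjugate of `g`, so `g` is trivial once `(ψ g).left` is.
-/

namespace KerFree

open Monoid.Coprod

variable {A Γ U : Type*} [Group A] [IsFreeGroup A] [Group Γ] [Group U]

/-- The action of `U` on `FreeGroup (U × B)` by left translation of the `U`-index of the
generators. -/
def shift (U B : Type*) [Group U] : U →* MulAut (FreeGroup (U × B)) where
  toFun u := FreeGroup.freeGroupCongr ((Equiv.mulLeft u).prodCongr (Equiv.refl B))
  map_one' := by
    apply MulEquiv.toMonoidHom_injective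
    ext x
    simp
  map_mul' u v := by
    apply MulEquiv.toMonoidHom_injective
    ext x
    simp [mul_assoc, Prod.map]

@[simp]
lemma shift_of {B : Type*} (u : U) (x : U × B) :
    shift U B u (FreeGroup.of x) = FreeGroup.of (u * x.1, x.2) := by
  simp [shift, Prod.map]

/-- The homomorphism `A ∗ Γ →* F ⋊ U` over `U` given by `b ↦ (x_{(1,b)}, φ b)` on a basis of `A`
and by `γ ↦ (1, φ γ)` on `Γ`. -/
noncomputable def psi (φ : Monoid.Coprod A Γ →* U) :
    Monoid.Coprod A Γ →*
      FreeGroup (U × IsFreeGroup.Generators A) ⋊[shift U (IsFreeGroup.Generators A)] U :=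
  lift
    (IsFreeGroup.lift fun b => ⟨FreeGroup.of (1, b), φ (inl (IsFreeGroup.of b))⟩)
    (SemidirectProduct.inr.comp (φ.comp inr))

lemma psi_right (φ : Monoid.Coprod A Γ →* U) (g : Monoid.Coprod A Γ) : (psi φ g).right = φ g := by
  suffices h : SemidirectProduct.rightHom.comp (psi φ) = φ from DFunLike.congr_fun h g
  apply hom_ext
  · apply IsFreeGroup.ext_hom
    intro b
    simp [psi]
  · ext γ
    simp [psi]

lemma exists_equivariant_retraction (i : Γ →* U) (hi : Function.Injective i) :
    ∃ r : U → Γ, ∀ u γ, r (u * i γ) = r u * γ := by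
  have h (u : U) : ∃ γ, i γ = (Quotient.out (u : U ⧸ i.range))⁻¹ * u :=
    QuotientGroup.eq.mp (Quotient.out_eq' (u : U ⧸ i.range))
  choose r hr using h
  refine ⟨r, fun u γ => hi ?_⟩
  have hq : ((u * i γ : U) : U ⧸ i.range) = u :=
    QuotientGroup.mk_mul_of_mem u ⟨γ, rfl⟩
  rw [map_mul, hr, hr, hq, mul_assoc]

/-- The homomorphism `x_{(u,b)} ↦ r(u) b r(u φ(b))⁻¹`. -/
noncomputable def rho (φ : Monoid.Coprod A Γ →* U) (r : U → Γ) :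
    FreeGroup (U × IsFreeGroup.Generators A) →* Monoid.Coprod A Γ :=
  FreeGroup.lift fun x =>
    inr (r x.1) * inl (IsFreeGroup.of x.2) * (inr (r (x.1 * φ (inl (IsFreeGroup.of x.2)))))⁻¹

/-- The `F`-component of `psi` determines its argument up to the `Γ`-valued correction `r`. -/
lemma rho_shift_psi_left (φ : Monoid.Coprod A Γ →* U) (r : U → Γ)
    (hr : ∀ u γ, r (u * φ (inr γ)) = r u * γ) (g : Monoid.Coprod A Γ) (u : U) :
    rho φ r (shift U _ u (psi φ g).left) = inr (r u) * g * (inr (r (u * φ g)))⁻¹ := by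
  -- The elements `g` satisfying the identity for every `u` form a subgroup.
  let S : Subgroup (Monoid.Coprod A Γ) :=
    { carrier := {g | ∀ u : U, rho φ r (shift U _ u (psi φ g).left)
        = inr (r u) * g * (inr (r (u * φ g)))⁻¹}
      one_mem' := fun u => by simp
      mul_mem' := fun {g h} hg hh u => by
        have hu := hh (u * φ g)
        rw [map_mul, MulAut.mul_apply] at hu
        rw [map_mul, SemidirectProduct.mul_left, map_mul, map_mul, hg u, psi_right, hu, map_mul]
        group
      inv_mem' := fun {g} hg u => by
        have hu := hg (u * (φ g)⁻¹)
        rw [map_mul, MulAut.mul_apply, map_inv (shift U _), inv_mul_cancel_right] at hu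
        rw [map_inv, SemidirectProduct.inv_left, psi_right, map_inv (shift U _), map_inv,
          map_inv, map_inv, hu, map_inv φ]
        group }
  have hl : ∀ a : A, inl a ∈ S := by
    have hb (b : IsFreeGroup.Generators A) : inl (IsFreeGroup.of b) ∈ S := fun u => by
      simp [psi, rho]
    -- A free group is generated by its basis: the map `A →* S` extending the inclusion of the
    -- basis agrees with `inl`.
    have key : S.subtype.comp (IsFreeGroup.lift fun b => ⟨_, hb b⟩) = (inl : A →* _) := by
      apply IsFreeGroup.ext_hom
      intro b
      simp
    intro a
    rw [← key]
    exact Subtype.property _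
  have hrr : ∀ γ : Γ, inr γ ∈ S := fun γ u => by
    simp [psi, hr]
  have hg : g ∈ S := by
    induction g using Monoid.Coprod.induction_on with
    | inl a => exact hl a
    | inr γ => exact hrr γ
    | mul x y hx hy => exact S.mul_mem hx hy
  exact hg u

/-- The `F`-component of `psi`, a homomorphism on the kernel of `φ`. -/
noncomputable def kerToFree (φ : Monoid.Coprod A Γ →* U) :
    φ.ker →* FreeGroup (U × IsFreeGroup.Generators A) where
  toFun g := (psi φ g).left
  map_one' := by simp
  map_mul' g h := by
    have hg : φ g = 1 := g.2
    simp [psi_right, hg]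

lemma kerToFree_injective (φ : Monoid.Coprod A Γ →* U)
    (hφ : Function.Injective (φ.comp Monoid.Coprod.inr)) :
    Function.Injective (kerToFree φ) := by
  obtain ⟨r, hr⟩ := exists_equivariant_retraction _ hφ
  rw [injective_iff_map_eq_one]
  intro g hg
  have h := rho_shift_psi_left φ r hr g 1
  have hg' : (psi φ g).left = 1 := hg
  have hk : φ g = 1 := g.2
  rw [hg', hk, map_one, map_one, mul_one, eq_comm, conj_eq_one_iff] at h
  exact Subtype.ext h

end KerFree

theorem ker_isFreeGroup_of_injOn_gamma
    (A Γ U : Type*) [Group A] [IsFreeGroup A] [Group Γ] [Group U]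
    (φ : Monoid.Coprod A Γ →* U)
    (hφ : Function.Injective (φ.comp Monoid.Coprod.inr)) :
    IsFreeGroup φ.ker :=
  IsFreeGroup.ofMulEquiv
    (MonoidHom.ofInjective (KerFree.kerToFree_injective φ hφ)).symm
end
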